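/- For every irrational x ∈ (0,1), the convergents of the odd continued fraction expansion of x converge to x: lim_{n→∞} p_n/q_n = x. -/

import Mathlib

open Real MeasureTheory Filter Set

namespace OCF

/-- The golden ratio `G = (1+√5)/2`. -/
noncomputable def G : ℝ := (1 + Real.sqrt 5) / 2

/-- `g = (√5-1)/2`. -/
noncomputable def gg : ℝ := (Real.sqrt 5 - 1) / 2

/-- The odd Gauss map. -/
noncomputable def T (x : ℝ) : ℝ :=
  if x = 0 then 0
  else if Odd ⌊1 / x⌋ then Int.fract (1 / x) else 1 - Int.fract (1 / x)

/-- `eps x n` is `ε_n(x)`; by convention `ε_0(x) = 1`. -/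
noncomputable def eps (x : ℝ) : ℕ → ℤ
  | 0 => 1
  | n + 1 => if Odd ⌊1 / (T^[n] x)⌋ then 1 else -1

/-- `a x n` is the `n`-th odd partial quotient `a_n(x)` (for `n ≥ 1`). -/
noncomputable def a (x : ℝ) : ℕ → ℤ
  | 0 => 1
  | n + 1 => if Odd ⌊1 / (T^[n] x)⌋ then ⌊1 / (T^[n] x)⌋ else 1 + ⌊1 / (T^[n] x)⌋

/-- `p x (n+1)` is the convergent numerator `p_n`; `p x 0 = p_{-1} = 1`, `p x 1 = p_0 = 0`. -/
noncomputable def p (x : ℝ) : ℕ → ℝ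
  | 0 => 1
  | 1 => 0
  | n + 2 => (a x (n + 1) : ℝ) * p x (n + 1) + (eps x n : ℝ) * p x n

/-- `q x (n+1)` is the convergent denominator `q_n`; `q x 0 = q_{-1} = 0`, `q x 1 = q_0 = 1`. -/
noncomputable def q (x : ℝ) : ℕ → ℝ
  | 0 => 0
  | 1 => 1
  | n + 2 => (a x (n + 1) : ℝ) * q x (n + 1) + (eps x n : ℝ) * q x n

end OCF

open OCF

/-!
Write `t_n = T^n x`. Unfolding the odd Gauss map gives `1 / t_n = a_{n+1} + ε_{n+1} t_{n+1}`, so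
that `x q_n - p_n`, which satisfies the same linear recurrence as `p` and `q`, is multiplied by
`-ε_n t_n` at each step. Since `t * T t ≤ 1 / 2` on `[0, 1]`, this error at least halves every two
steps. The denominators need not increase, but `q_n + ε_n q_{n-1}` does not decrease, and this
keeps `q_n ≥ 1`; hence `|x - p_n / q_n| ≤ |x q_n - p_n| → 0`.
-/

namespace OCF

section Recurrence

theorem recurrence_succ_eq_neg_mul {R : Type*} [CommRing R] {b e t z : ℕ → R}
    (hz : ∀ n, z (n + 2) = b n * z (n + 1) + e n * z n)
    (ht : ∀ n, t n * (b n + e (n + 1) * t (n + 1)) = 1)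
    (hz_one : z 1 = -(e 0 * t 0) * z 0) (n : ℕ) :
    z (n + 1) = -(e n * t n) * z n := by
  induction n with
  | zero => exact hz_one
  | succ n ih =>
    linear_combination hz n + (b n + e (n + 1) * t (n + 1)) * ih - e n * z n * ht n

theorem one_le_recurrence_succ {R : Type*} [CommRing R] [PartialOrder R] [IsOrderedRing R]
    {b e d : ℕ → R} (hd : ∀ n, d (n + 2) = b n * d (n + 1) + e n * d n)
    (hb : ∀ n, 1 ≤ b n) (hbe : ∀ n, 1 ≤ b n + e (n + 1))
    (hd_one : 1 ≤ d 1) (hd_one_add : 1 ≤ d 1 + e 0 * d 0) (n : ℕ) :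
    1 ≤ d (n + 1) := by
  suffices h : 1 ≤ d (n + 1) ∧ 1 ≤ d (n + 1) + e n * d n from h.1
  induction n with
  | zero => exact ⟨hd_one, hd_one_add⟩
  | succ n ih =>
    obtain ⟨hone, hsum⟩ := ih
    have hnonneg : 0 ≤ d (n + 1) := zero_le_one.trans hone
    constructor
    · calc 1 ≤ d (n + 1) + e n * d n := hsum
        _ ≤ b n * d (n + 1) + e n * d n := by gcongr; exact le_mul_of_one_le_left hnonneg (hb n)
        _ = d (n + 2) := (hd n).symm
    · calc 1 ≤ d (n + 1) + e n * d n := hsum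
        _ ≤ (b n + e (n + 1)) * d (n + 1) + e n * d n := by
          gcongr; exact le_mul_of_one_le_left hnonneg (hbe n)
        _ = d (n + 2) + e (n + 1) * d (n + 1) := by rw [hd n]; ring

theorem tendsto_zero_of_add_two_le_mul {d : ℕ → ℝ} {r : ℝ} (hr₀ : 0 ≤ r) (hr₁ : r < 1)
    (hd_nonneg : ∀ n, 0 ≤ d n) (hd : ∀ n, d (n + 2) ≤ r * d n) :
    Tendsto d atTop (nhds 0) := by
  have hbound : ∀ n, d n ≤ max (d 0) (d 1) * r ^ (n / 2) := by
    intro n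
    induction n using Nat.twoStepInduction with
    | zero => simp
    | one => simp
    | more n ih _ =>
      calc d (n + 2) ≤ r * d n := hd n
        _ ≤ r * (max (d 0) (d 1) * r ^ (n / 2)) := by gcongr
        _ = max (d 0) (d 1) * r ^ ((n + 2) / 2) := by
          rw [Nat.add_div_right n two_pos, pow_succ]; ring
  have hpow : Tendsto (fun n : ℕ => r ^ (n / 2)) atTop (nhds 0) :=
    (tendsto_pow_atTop_nhds_zero_of_lt_one hr₀ hr₁).comp
      (Nat.tendsto_div_const_atTop two_ne_zero)
  exact squeeze_zero hd_nonneg hbound (by simpa using hpow.const_mul (max (d 0) (d 1)))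

end Recurrence

section OddGaussMap

variable {t : ℝ}

theorem T_mem_Icc (t : ℝ) : T t ∈ Icc (0 : ℝ) 1 := by
  have hnonneg := Int.fract_nonneg (1 / t)
  have hlt := Int.fract_lt_one (1 / t)
  unfold T
  split_ifs
  · simp
  · exact ⟨hnonneg, hlt.le⟩
  · constructor <;> linarith

theorem irrational_T (ht : Irrational t) : Irrational (T t) := by
  have hfract : Irrational (Int.fract (1 / t)) := by
    rw [one_div]
    exact ht.inv.sub_intCast _
  rw [T, if_neg ht.ne_zero]
  split_ifs
  · exact hfract
  · exact_mod_cast hfract.intCast_sub 1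

theorem irrational_iterate_T (ht : Irrational t) (n : ℕ) : Irrational (T^[n] t) :=
  MapsTo.iterate (s := {t | Irrational t}) (fun _ => irrational_T) n ht

theorem T_mem_Ioo (ht : Irrational t) : T t ∈ Ioo (0 : ℝ) 1 :=
  ⟨(T_mem_Icc t).1.lt_of_ne (irrational_T ht).ne_zero.symm,
    (T_mem_Icc t).2.lt_of_ne (irrational_T ht).ne_one⟩

theorem iterate_T_mem_Ioo (hirr : Irrational t) (ht : t ∈ Ioo (0 : ℝ) 1) (n : ℕ) :
    T^[n] t ∈ Ioo (0 : ℝ) 1 := by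
  cases n with
  | zero => exact ht
  | succ n =>
    rw [Function.iterate_succ_apply']
    exact T_mem_Ioo (irrational_iterate_T hirr n)

theorem mul_T_le_half (ht : t ∈ Icc (0 : ℝ) 1) : t * T t ≤ 1 / 2 := by
  obtain ⟨ht₀, ht₁⟩ := ht
  rcases le_or_gt t (1 / 2) with hle | hgt
  · calc t * T t ≤ t * 1 := by gcongr; exact (T_mem_Icc t).2
      _ ≤ 1 / 2 := by rwa [mul_one]
  · have hpos : 0 < t := by linarith
    have hfloor : ⌊1 / t⌋ = 1 := by
      rw [Int.floor_eq_iff, le_div_iff₀ hpos, div_lt_iff₀ hpos, Int.cast_one]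
      constructor <;> linarith
    have hT : T t = 1 / t - 1 := by
      rw [T, if_neg hpos.ne', hfloor, if_pos odd_one, Int.fract, hfloor, Int.cast_one]
    calc t * T t = 1 - t := by rw [hT]; field_simp
      _ ≤ 1 / 2 := by linarith

end OddGaussMap

section Digits

variable {x : ℝ} {n : ℕ}

theorem abs_eps (x : ℝ) (n : ℕ) : |(eps x n : ℝ)| = 1 := by
  cases n with
  | zero => simp [eps]
  | succ n => simp only [eps]; split_ifs <;> simp

theorem a_add_eps_mul_iterate_T (hn : T^[n] x ≠ 0) :
    (a x (n + 1) : ℝ) + eps x (n + 1) * T^[n + 1] x = 1 / T^[n] x := by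
  have hfloor := Int.floor_add_fract (1 / T^[n] x)
  rw [Function.iterate_succ_apply', T, if_neg hn]
  simp only [a, eps]
  split_ifs <;> push_cast <;> linarith

theorem one_le_floor_one_div {t : ℝ} (ht : t ∈ Ioc (0 : ℝ) 1) : 1 ≤ ⌊1 / t⌋ := by
  rw [Int.le_floor, Int.cast_one]
  exact one_le_one_div ht.1 ht.2

theorem one_le_a (hn : T^[n] x ∈ Ioc (0 : ℝ) 1) : 1 ≤ a x (n + 1) := by
  have hfloor := one_le_floor_one_div hn
  simp only [a]
  split_ifs <;> lia

theorem one_le_a_add_eps (hn : T^[n] x ∈ Ioc (0 : ℝ) 1) :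
    1 ≤ a x (n + 1) + eps x (n + 1) := by
  have hfloor := one_le_floor_one_div hn
  simp only [a, eps]
  split_ifs <;> lia

end Digits

section Convergents

variable {x : ℝ}

/-- The error `x q_{n-1} - p_{n-1}` of the convergent with the index shift of `p` and `q`, cleared
of its denominator so that it satisfies their recurrence. -/
noncomputable def linearError (x : ℝ) (n : ℕ) : ℝ := x * q x n - p x n

theorem linearError_add_two (x : ℝ) (n : ℕ) :
    linearError x (n + 2) = a x (n + 1) * linearError x (n + 1) + eps x n * linearError x n := by
  simp only [linearError, p, q]
  ring

theorem linearError_succ (hx : ∀ n, T^[n] x ≠ 0) (n : ℕ) :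
    linearError x (n + 1) = -(eps x n * T^[n] x) * linearError x n := by
  refine recurrence_succ_eq_neg_mul (b := fun n => (a x (n + 1) : ℝ))
    (e := fun n => (eps x n : ℝ)) (t := fun n => T^[n] x) (linearError_add_two x) ?_ ?_ n
  · intro n
    rw [a_add_eps_mul_iterate_T (hx n), mul_one_div_cancel (hx n)]
  · simp [linearError, p, q, eps]

theorem abs_linearError_succ (hx : ∀ n, T^[n] x ≠ 0) (n : ℕ) :
    |linearError x (n + 1)| = |T^[n] x| * |linearError x n| := by
  rw [linearError_succ hx, abs_mul, abs_neg, abs_mul, abs_eps, one_mul]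

theorem abs_linearError_add_two_le (hx : ∀ n, T^[n] x ∈ Ioc (0 : ℝ) 1) (n : ℕ) :
    |linearError x (n + 2)| ≤ 1 / 2 * |linearError x n| := by
  have hne : ∀ n, T^[n] x ≠ 0 := fun n => (hx n).1.ne'
  calc |linearError x (n + 2)|
      = T^[n] x * T (T^[n] x) * |linearError x n| := by
        rw [abs_linearError_succ hne, abs_linearError_succ hne, abs_of_pos (hx (n + 1)).1,
          abs_of_pos (hx n).1, Function.iterate_succ_apply']
        ring
    _ ≤ 1 / 2 * |linearError x n| := by
        gcongr
        exact mul_T_le_half (Ioc_subset_Icc_self (hx n))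

theorem tendsto_abs_linearError (hx : ∀ n, T^[n] x ∈ Ioc (0 : ℝ) 1) :
    Tendsto (fun n => |linearError x n|) atTop (nhds 0) :=
  tendsto_zero_of_add_two_le_mul (by norm_num) (by norm_num) (fun _ => abs_nonneg _)
    (abs_linearError_add_two_le hx)

theorem one_le_q (hx : ∀ n, T^[n] x ∈ Ioc (0 : ℝ) 1) (n : ℕ) : 1 ≤ q x (n + 1) := by
  refine one_le_recurrence_succ (b := fun n => (a x (n + 1) : ℝ)) (e := fun n => (eps x n : ℝ))
    (d := q x) (fun _ => rfl) ?_ ?_ le_rfl ?_ n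
  · exact fun n => mod_cast one_le_a (hx n)
  · exact fun n => mod_cast one_le_a_add_eps (hx n)
  · simp [q]

theorem dist_convergent_le (hx : ∀ n, T^[n] x ∈ Ioc (0 : ℝ) 1) (n : ℕ) :
    dist (p x (n + 1) / q x (n + 1)) x ≤ |linearError x (n + 1)| := by
  have hq : 1 ≤ q x (n + 1) := one_le_q hx n
  have hq₀ : 0 < q x (n + 1) := one_pos.trans_le hq
  calc dist (p x (n + 1) / q x (n + 1)) x
      = |linearError x (n + 1) / q x (n + 1)| := by
        rw [dist_comm, Real.dist_eq, linearError, sub_div, mul_div_cancel_right₀ _ hq₀.ne']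
    _ = |linearError x (n + 1)| / q x (n + 1) := by rw [abs_div, abs_of_pos hq₀]
    _ ≤ |linearError x (n + 1)| := div_le_self (abs_nonneg _) hq

end Convergents

end OCF

/-- For every irrational `x ∈ (0,1)`, the OCF convergents converge to `x`:
`lim_{n→∞} p_n/q_n = x`. -/
theorem ocf_convergents_tendsto (x : ℝ) (hirr : Irrational x) (hx : x ∈ Set.Ioo (0 : ℝ) 1) :
    Filter.Tendsto (fun n : ℕ => OCF.p x (n + 1) / OCF.q x (n + 1)) Filter.atTop (nhds x) := by
  have horbit : ∀ n, T^[n] x ∈ Ioc (0 : ℝ) 1 := fun n =>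
    Ioo_subset_Ioc_self (iterate_T_mem_Ioo hirr hx n)
  have herror : Tendsto (fun n => |linearError x (n + 1)|) atTop (nhds 0) :=
    (tendsto_abs_linearError horbit).comp (tendsto_add_atTop_nat 1)
  rw [tendsto_iff_dist_tendsto_zero]
  exact squeeze_zero (fun _ => dist_nonneg) (dist_convergent_le horbit) herror
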